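/- Convex-split lemma (relative entropy form): Let ρ_{AB} be a bipartite density operator with marginals ρ_A, ρ_B, let ρ̃_{AB} be another density operator on AB with marginal ρ̃_B, and suppose ρ̃_{AB} ≤ 2^λ ρ_A ⊗ ρ̃_B. Define τ̃ on A₁...A_K B as the uniform mixture over k ∈ {1,...,K} of ρ_{A₁}⊗...⊗ρ_{A_{k−1}} ⊗ ρ̃_{A_k B} ⊗ ρ_{A_{k+1}}⊗...⊗ρ_{A_K}, where each A_i carries a copy of H_A and ρ̃_{A_k B} means ρ̃_{AB} placed on systems A_k and B. Then the fidelity satisfies F(τ̃, ρ_A^{⊗K} ⊗ ρ̃_B) ≥ 1 − 2^λ/K. -/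

import Mathlib

open Matrix Kronecker ComplexOrder

/-- Apply a real function to a Hermitian matrix via its spectral decomposition
(junk value `0` for non-Hermitian input). -/
noncomputable def matFun {n : Type*} [Fintype n] [DecidableEq n]
    (f : ℝ → ℝ) (A : Matrix n n ℂ) : Matrix n n ℂ :=
  if hA : A.IsHermitian then
    (hA.eigenvectorUnitary : Matrix n n ℂ) *
      Matrix.diagonal (fun i => (f (hA.eigenvalues i) : ℂ)) *
      star (hA.eigenvectorUnitary : Matrix n n ℂ)
  else 0

/-- Matrix logarithm base 2, taken on the support (eigenvalue 0 ↦ 0 since `Real.logb 2 0 = 0`). -/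
noncomputable def mlog {n : Type*} [Fintype n] [DecidableEq n] (A : Matrix n n ℂ) :
    Matrix n n ℂ := matFun (Real.logb 2) A

/-- Positive-semidefinite square root of a Hermitian matrix. -/
noncomputable def msqrt {n : Type*} [Fintype n] [DecidableEq n] (A : Matrix n n ℂ) :
    Matrix n n ℂ := matFun Real.sqrt A

/-- Square root of the Moore–Penrose pseudoinverse (on the support), i.e. `A ↦ A^{-1/2}`. -/
noncomputable def pinvSqrt {n : Type*} [Fintype n] [DecidableEq n] (A : Matrix n n ℂ) :
    Matrix n n ℂ := matFun (fun x => (Real.sqrt x)⁻¹) A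

/-- Trace norm `‖A‖₁ = Tr √(AᴴA)`. -/
noncomputable def traceNorm {n : Type*} [Fintype n] [DecidableEq n] (A : Matrix n n ℂ) : ℝ :=
  (msqrt (Aᴴ * A)).trace.re

/-- Quantum relative entropy (base 2), `D(ρ‖σ) = Tr{ρ (log₂ρ − log₂σ)}`. -/
noncomputable def relEnt {n : Type*} [Fintype n] [DecidableEq n] (ρ σ : Matrix n n ℂ) : ℝ :=
  (ρ * (mlog ρ - mlog σ)).trace.re

/-- Root fidelity `√F(ρ,σ) = ‖√ρ√σ‖₁`. -/
noncomputable def sqrtFid {n : Type*} [Fintype n] [DecidableEq n] (ρ σ : Matrix n n ℂ) : ℝ :=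
  traceNorm (msqrt ρ * msqrt σ)

/-- Fidelity `F(ρ,σ) = ‖√ρ√σ‖₁²`. -/
noncomputable def fid {n : Type*} [Fintype n] [DecidableEq n] (ρ σ : Matrix n n ℂ) : ℝ :=
  (sqrtFid ρ σ) ^ 2

/-- Von Neumann entropy (base 2). -/
noncomputable def vnEntropy {n : Type*} [Fintype n] [DecidableEq n] (ρ : Matrix n n ℂ) : ℝ :=
  -((ρ * mlog ρ).trace.re)

/-- A density operator: positive semi-definite with unit trace. -/
def IsDensity {n : Type*} [Fintype n] [DecidableEq n] (ρ : Matrix n n ℂ) : Prop :=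
  ρ.PosSemidef ∧ ρ.trace = 1

/-- Support inclusion `supp ρ ⊆ supp σ`, phrased via kernel containment. -/
def SuppLE {n : Type*} [Fintype n] [DecidableEq n] (ρ σ : Matrix n n ℂ) : Prop :=
  ∀ v : n → ℂ, σ *ᵥ v = 0 → ρ *ᵥ v = 0

/-- A-marginal (partial trace over B) of a bipartite matrix. -/
noncomputable def margA {a b : Type*} [Fintype a] [Fintype b]
    (ρ : Matrix (a × b) (a × b) ℂ) : Matrix a a ℂ :=
  Matrix.of fun i i' => ∑ j, ρ (i, j) (i', j)

/-- B-marginal (partial trace over A) of a bipartite matrix. -/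
noncomputable def margB {a b : Type*} [Fintype a] [Fintype b]
    (ρ : Matrix (a × b) (a × b) ℂ) : Matrix b b ℂ :=
  Matrix.of fun j j' => ∑ i, ρ (i, j) (i, j')

/-- Max-relative entropy `D_max(ω‖τ) = inf{λ : ω ≤ 2^λ τ}`. -/
noncomputable def Dmax {n : Type*} [Fintype n] [DecidableEq n] (ω τ : Matrix n n ℂ) : ℝ :=
  sInf {l : ℝ | ((2 : ℝ) ^ l • τ - ω).PosSemidef}

/-- Purified distance between (normalized) states, `P(ρ,σ) = √(1 − F(ρ,σ))`. -/
noncomputable def pDist {n : Type*} [Fintype n] [DecidableEq n] (ρ σ : Matrix n n ℂ) : ℝ :=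
  Real.sqrt (1 - fid ρ σ)

set_option linter.unusedSectionVars false
set_option linter.unusedSimpArgs false

namespace CS

section spectral
variable {n : Type*} [Fintype n] [DecidableEq n]

lemma matFun_mul (f g : ℝ → ℝ) (A : Matrix n n ℂ) :
    matFun f A * matFun g A = matFun (fun x => f x * g x) A := by
  unfold matFun
  split_ifs with hA
  · have hU : star (hA.eigenvectorUnitary : Matrix n n ℂ) * (hA.eigenvectorUnitary : Matrix n n ℂ) = 1 :=
      Unitary.coe_star_mul_self _
    calc _ = (hA.eigenvectorUnitary : Matrix n n ℂ) * Matrix.diagonal (fun i => (f (hA.eigenvalues i) : ℂ))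
          * (star (hA.eigenvectorUnitary : Matrix n n ℂ) * (hA.eigenvectorUnitary : Matrix n n ℂ))
          * Matrix.diagonal (fun i => (g (hA.eigenvalues i) : ℂ))
          * star (hA.eigenvectorUnitary : Matrix n n ℂ) := by simp only [mul_assoc]
      _ = _ := by
        rw [hU, mul_one, mul_assoc (hA.eigenvectorUnitary : Matrix n n ℂ), Matrix.diagonal_mul_diagonal]
        simp
  · simp

lemma matFun_psd {f : ℝ → ℝ} (hf : ∀ x, 0 ≤ f x) (A : Matrix n n ℂ) : (matFun f A).PosSemidef := by
  unfold matFun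
  split_ifs with hA
  · rw [Matrix.star_eq_conjTranspose]
    apply Matrix.PosSemidef.mul_mul_conjTranspose_same
    apply Matrix.PosSemidef.diagonal
    intro i
    simpa using hf _
  · exact Matrix.PosSemidef.zero

lemma matFun_id {A : Matrix n n ℂ} (hA : A.IsHermitian) : matFun (fun x => x) A = A := by
  unfold matFun
  rw [dif_pos hA]
  conv_rhs => rw [hA.spectral_theorem, Unitary.conjStarAlgAut_apply]
  rfl

lemma matFun_congr {f g : ℝ → ℝ} (hfg : ∀ x, 0 ≤ x → f x = g x) {A : Matrix n n ℂ}
    (hA : A.PosSemidef) : matFun f A = matFun g A := by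
  unfold matFun
  rw [dif_pos hA.1, dif_pos hA.1]
  congr 3
  funext i
  rw [hfg _ (hA.eigenvalues_nonneg i)]

lemma msqrt_psd (A : Matrix n n ℂ) : (msqrt A).PosSemidef :=
  matFun_psd Real.sqrt_nonneg A

lemma msqrt_mul_self {A : Matrix n n ℂ} (hA : A.PosSemidef) : msqrt A * msqrt A = A := by
  unfold msqrt
  rw [matFun_mul, matFun_congr (g := fun x => x) (fun x hx => Real.mul_self_sqrt hx) hA,
    matFun_id hA.1]

open scoped MatrixOrder Matrix.Norms.L2Operator in
lemma psd_sqrt_unique {A B : Matrix n n ℂ} (hA : A.PosSemidef) (hB : B.PosSemidef)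
    (hAB : A * A = B * B) : A = B := by
  have h1 := CFC.sqrt_unique (a := B * B) hAB hA.nonneg
  have h2 := CFC.sqrt_unique (a := B * B) rfl hB.nonneg
  rw [← h1, h2]

lemma msqrt_unique {A s : Matrix n n ℂ} (hs : s.PosSemidef) (h : s * s = A) : msqrt A = s := by
  have hA : A.PosSemidef := by
    rw [← h]
    nth_rewrite 1 [← hs.1.eq]
    exact Matrix.posSemidef_conjTranspose_mul_self s
  exact psd_sqrt_unique (msqrt_psd A) hs (by rw [msqrt_mul_self hA, h])

lemma exists_pinv {A : Matrix n n ℂ} (hA : A.PosSemidef) :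
    ∃ r P : Matrix n n ℂ, r.PosSemidef ∧ P.PosSemidef ∧ msqrt A * r = P ∧ r * msqrt A = P ∧
      P * msqrt A = msqrt A ∧ r * A * r = P ∧ P * A = A ∧ P * P = P ∧ P * r = r ∧ A * r = msqrt A
      ∧ r * A = msqrt A := by
  refine ⟨matFun (fun x => (Real.sqrt x)⁻¹) A, matFun (fun x => Real.sqrt x * (Real.sqrt x)⁻¹) A,
    matFun_psd (fun x => by positivity) A, matFun_psd (fun x => by positivity) A, ?_, ?_, ?_, ?_, ?_,
    ?_, ?_, ?_, ?_⟩
  · exact matFun_mul _ _ _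
  · rw [msqrt, matFun_mul]; congr 1; funext x; ring
  · rw [msqrt, matFun_mul]; congr 1; funext x
    by_cases h : Real.sqrt x = 0 <;> simp [h]
  · nth_rewrite 2 [← matFun_id hA.1]
    rw [matFun_mul, matFun_mul]
    apply matFun_congr _ hA
    intro x hx
    by_cases h : Real.sqrt x = 0
    · simp [h]
    · nth_rewrite 2 [← Real.mul_self_sqrt hx]
      field_simp
  · nth_rewrite 2 [← matFun_id hA.1]
    nth_rewrite 3 [← matFun_id hA.1]
    rw [matFun_mul]
    apply matFun_congr _ hA
    intro x hx
    by_cases h : Real.sqrt x = 0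
    · simp [h, (Real.sqrt_eq_zero hx).1 h]
    · field_simp
  · rw [matFun_mul]; congr 1; funext x
    by_cases h : Real.sqrt x = 0 <;> simp [h]
  · rw [matFun_mul]; congr 1; funext x
    by_cases h : Real.sqrt x = 0 <;> simp [h]
  · nth_rewrite 1 [← matFun_id hA.1]
    rw [msqrt, matFun_mul]
    apply matFun_congr _ hA
    intro x hx
    by_cases h : Real.sqrt x = 0
    · simp [h]
    · nth_rewrite 1 [← Real.mul_self_sqrt hx]
      field_simp
  · nth_rewrite 2 [← matFun_id hA.1]
    rw [msqrt, matFun_mul]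
    apply matFun_congr _ hA
    intro x hx
    by_cases h : Real.sqrt x = 0
    · simp [h]
    · nth_rewrite 2 [← Real.mul_self_sqrt hx]
      field_simp

lemma re_trace_le_traceNorm (A : Matrix n n ℂ) : A.trace.re ≤ traceNorm A := by
  have hA : (Aᴴ * A).IsHermitian := (Matrix.posSemidef_conjTranspose_mul_self A).1
  unfold traceNorm msqrt matFun
  rw [dif_pos hA]
  set U : Matrix n n ℂ := (hA.eigenvectorUnitary : Matrix n n ℂ) with hUdef
  have hU : star U * U = 1 := Unitary.coe_star_mul_self _
  have hU' : U * star U = 1 := Unitary.coe_mul_star_self _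
  rw [Matrix.trace_mul_comm, ← mul_assoc, hU, one_mul]
  have hB : A.trace = (star U * A * U).trace := by
    rw [Matrix.trace_mul_comm, ← mul_assoc, hU', one_mul]
  have hD : (star U * A * U)ᴴ * (star U * A * U) = Matrix.diagonal (fun i => (hA.eigenvalues i : ℂ)) := by
    have h1 : Aᴴ * A = U * Matrix.diagonal (fun i => (hA.eigenvalues i : ℂ)) * star U :=
      (matFun_id hA).symm.trans (by unfold matFun; rw [dif_pos hA])
    simp only [Matrix.conjTranspose_mul, Matrix.star_eq_conjTranspose, Matrix.conjTranspose_conjTranspose] at *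
    calc _ = Uᴴ * Aᴴ * (U * Uᴴ) * A * U := by simp only [mul_assoc]
      _ = Uᴴ * (Aᴴ * A) * U := by rw [hU']; simp only [mul_assoc, one_mul]
      _ = (Uᴴ * U) * Matrix.diagonal (fun i => (hA.eigenvalues i : ℂ)) * (Uᴴ * U) := by
        refine (congrArg (fun Z => Uᴴ * Z * U) h1).trans ?_
        simp only [mul_assoc]
      _ = _ := by rw [hU]; simp
  rw [hB]
  generalize star U * A * U = B at hD
  simp only [Matrix.trace, Matrix.diag_apply, Matrix.diagonal_apply_eq, Complex.re_sum, Complex.ofReal_re]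
  apply Finset.sum_le_sum
  intro i _
  have h2 := congrFun (congrFun hD i) i
  rw [Matrix.diagonal_apply_eq, Matrix.mul_apply] at h2
  have h3 : ∑ j, ‖B j i‖ ^ 2 = hA.eigenvalues i := by
    have : ((∑ j, ‖B j i‖ ^ 2 : ℝ) : ℂ) = (hA.eigenvalues i : ℂ) := by
      rw [← h2]
      push_cast
      apply Finset.sum_congr rfl
      intro j _
      rw [Matrix.conjTranspose_apply, ← Complex.conj_mul']
      rfl
    exact_mod_cast this
  apply Real.le_sqrt_of_sq_le
  rw [← h3]
  calc (B i i).re ^ 2 ≤ ‖B i i‖ ^ 2 := by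
        rw [← sq_abs]
        gcongr
        exact Complex.abs_re_le_norm _
    _ ≤ _ := Finset.single_le_sum (f := fun j => ‖B j i‖ ^ 2) (fun j _ => by positivity) (Finset.mem_univ i)

/-- trace of product of PSD -/
lemma trace_mul_nonneg {A B : Matrix n n ℂ} (hA : A.PosSemidef) (hB : B.PosSemidef) :
    0 ≤ (A * B).trace.re := by
  have h := hB.mul_mul_conjTranspose_same (msqrt A)
  have h2 := h.trace_nonneg
  rw [(msqrt_psd A).1.eq, Matrix.trace_mul_comm, ← mul_assoc, msqrt_mul_self hA] at h2
  exact (Complex.le_def.1 h2).1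

lemma psd_mul_zero {C Q : Matrix n n ℂ} (hC : C.PosSemidef) (h : Qᴴ * C * Q = 0) : C * Q = 0 := by
  have h1 : (msqrt C * Q)ᴴ * (msqrt C * Q) = 0 := by
    rw [Matrix.conjTranspose_mul, (msqrt_psd C).1.eq, ← h]
    nth_rewrite 3 [← msqrt_mul_self hC]
    simp only [mul_assoc]
  rw [Matrix.conjTranspose_mul_self_eq_zero] at h1
  rw [← msqrt_mul_self hC, mul_assoc, h1, mul_zero]

open scoped MatrixOrder in
lemma supp_le {A C P : Matrix n n ℂ} {c : ℝ} (hC : C.PosSemidef) (hP : P.PosSemidef)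
    (hPA : P * A = A) (hle : (c • A - C).PosSemidef) : C * P = C ∧ P * C = C := by
  have hQ : (1 - P)ᴴ = 1 - P := by rw [Matrix.conjTranspose_sub, hP.1.eq, Matrix.conjTranspose_one]
  have h1 := hle.conjTranspose_mul_mul_same (1 - P)
  have h2 := hC.conjTranspose_mul_mul_same (1 - P)
  have h3 : (1 - P)ᴴ * (c • A - C) * (1 - P) = - ((1 - P)ᴴ * C * (1 - P)) := by
    have : (1 - P) * (c • A) = 0 := by
      rw [mul_smul_comm, sub_mul, one_mul, hPA, sub_self, smul_zero]
    rw [hQ, mul_sub (1 - P) (c • A) C, this]; simp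
  rw [h3] at h1
  have h4 : (1 - P)ᴴ * C * (1 - P) = 0 :=
    le_antisymm (neg_nonneg.1 h1.nonneg) h2.nonneg
  have h5 := psd_mul_zero hC h4
  rw [mul_sub, mul_one, sub_eq_zero] at h5
  refine ⟨h5.symm, ?_⟩
  have h6 := congrArg Matrix.conjTranspose h5
  rw [Matrix.conjTranspose_mul, hC.1.eq, hP.1.eq] at h6
  exact h6.symm

lemma sqrt_supp {τ P : Matrix n n ℂ} (hτ : τ.PosSemidef) (h : P * τ = τ) :
    P * msqrt τ = msqrt τ := by
  have h1 : ((1 - P) * msqrt τ) * ((1 - P) * msqrt τ)ᴴ = 0 := by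
    rw [Matrix.conjTranspose_mul, (msqrt_psd τ).1.eq]
    calc _ = (1 - P) * (msqrt τ * msqrt τ) * (1 - P)ᴴ := by simp only [mul_assoc]
      _ = 0 := by rw [msqrt_mul_self hτ, sub_mul, h]; simp
  rw [Matrix.self_mul_conjTranspose_eq_zero, sub_mul, one_mul, sub_eq_zero] at h1
  exact h1.symm

lemma core {s t R : Matrix n n ℂ} (hs : s.PosSemidef) (ht : t.PosSemidef) (hR : R.PosSemidef)
    (hsRs : s * R * s = s) (hsRt : s * R * t = t) (htr : (t * t).trace = 1) :
    2 - (1 + (R * (t * t) * R * (t * t)).trace.re) / 2 ≤ (t * s).trace.re := by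
  have htRs : t * R * s = t := by
    have := congrArg Matrix.conjTranspose hsRt
    simpa [Matrix.conjTranspose_mul, hs.1.eq, ht.1.eq, hR.1.eq, mul_assoc] using this
  have h1 : ((s - t) * R * (s - t)).PosSemidef := by
    have := hR.mul_mul_conjTranspose_same (s - t)
    rwa [Matrix.conjTranspose_sub, hs.1.eq, ht.1.eq] at this
  have e1 : (s - t) * R * (s - t) = s - t - t + t * R * t := by
    rw [sub_mul, sub_mul, mul_sub, mul_sub, hsRs, hsRt, htRs]; abel
  have h2 := trace_mul_nonneg ht h1
  rw [e1, mul_add, mul_sub, mul_sub] at h2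
  simp only [Matrix.trace_add, Matrix.trace_sub, htr, Complex.add_re, Complex.sub_re, Complex.one_re] at h2
  have h3 : ((t - t * R * t) * (t - t * R * t)).PosSemidef := by
    have := Matrix.posSemidef_conjTranspose_mul_self (t - t * R * t)
    simpa [Matrix.conjTranspose_mul, ht.1.eq, hR.1.eq, mul_assoc] using this
  have h4 := (Complex.le_def.1 h3.trace_nonneg).1
  have e2 : (t - t * R * t) * (t - t * R * t) =
      t * t - t * (t * R * t) - (t * R * t) * t + (t * R * t) * (t * R * t) := by
    rw [sub_mul, mul_sub, mul_sub]; abel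
  have e3 : ((t * R * t) * (t * R * t)).trace = (R * (t * t) * R * (t * t)).trace := by
    rw [mul_assoc t R t, mul_assoc t (R * t), Matrix.trace_mul_comm]
    simp only [mul_assoc]
  rw [e2] at h4
  simp only [Matrix.trace_add, Matrix.trace_sub, htr, Complex.add_re, Complex.sub_re, Complex.one_re,
    Matrix.trace_mul_comm (t * R * t) t, e3, Complex.zero_re] at h4
  linarith

end spectral

section emb
variable {a b : Type*} [Fintype a] [DecidableEq a] [Fintype b] [DecidableEq b] {K : ℕ}

lemma margA_psd {ρ : Matrix (a × b) (a × b) ℂ} (h : ρ.PosSemidef) : (margA ρ).PosSemidef := by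
  have : margA ρ = ∑ j, ρ.submatrix (fun i => (i, j)) (fun i => (i, j)) := by
    ext i i'
    simp [margA, Matrix.sum_apply]
  rw [this]
  exact Matrix.posSemidef_sum _ (fun j _ => h.submatrix _)

lemma margB_psd {ρ : Matrix (a × b) (a × b) ℂ} (h : ρ.PosSemidef) : (margB ρ).PosSemidef := by
  have : margB ρ = ∑ i, ρ.submatrix (fun j => (i, j)) (fun j => (i, j)) := by
    ext i i'
    simp [margB, Matrix.sum_apply]
  rw [this]
  exact Matrix.posSemidef_sum _ (fun j _ => h.submatrix _)

lemma trace_margA (ρ : Matrix (a × b) (a × b) ℂ) : (margA ρ).trace = ρ.trace := by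
  simp [margA, Matrix.trace, Fintype.sum_prod_type]

lemma trace_margB (ρ : Matrix (a × b) (a × b) ℂ) : (margB ρ).trace = ρ.trace := by
  simp [margB, Matrix.trace, Fintype.sum_prod_type_right]

lemma margB_mul_kron (N : Matrix (a × b) (a × b) ℂ) (M : Matrix a a ℂ) (c d : b) :
    margB (N * (M ⊗ₖ (1 : Matrix b b ℂ))) c d = ∑ x, ∑ y, N (x, c) (y, d) * M y x := by
  simp [margB, Matrix.mul_apply, Fintype.sum_prod_type, Matrix.one_apply]

lemma margB_kron_mul (N : Matrix (a × b) (a × b) ℂ) (M : Matrix a a ℂ) (d c : b) :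
    margB ((M ⊗ₖ (1 : Matrix b b ℂ)) * N) d c = ∑ x, ∑ y, M x y * N (y, d) (x, c) := by
  simp [margB, Matrix.mul_apply, Fintype.sum_prod_type, Matrix.one_apply]

lemma margB_comm (N : Matrix (a × b) (a × b) ℂ) (M : Matrix a a ℂ) :
    margB ((M ⊗ₖ (1 : Matrix b b ℂ)) * N) = margB (N * (M ⊗ₖ (1 : Matrix b b ℂ))) := by
  ext c d
  rw [margB_mul_kron, margB_kron_mul, Finset.sum_comm]
  simp only [mul_comm]

lemma margB_left (N : Matrix (a × b) (a × b) ℂ) (B : Matrix b b ℂ) :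
    margB (((1 : Matrix a a ℂ) ⊗ₖ B) * N) = B * margB N := by
  ext c d
  simp only [margB, Matrix.of_apply, Matrix.mul_apply, Fintype.sum_prod_type, Matrix.kroneckerMap_apply,
    Matrix.one_apply, ite_mul, one_mul, zero_mul, Finset.mul_sum]
  rw [Finset.sum_comm (γ := b)]
  simp

lemma margB_right (N : Matrix (a × b) (a × b) ℂ) (B : Matrix b b ℂ) :
    margB (N * ((1 : Matrix a a ℂ) ⊗ₖ B)) = margB N * B := by
  ext c d
  simp only [margB, Matrix.of_apply, Matrix.mul_apply, Fintype.sum_prod_type, Matrix.kroneckerMap_apply,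
    Matrix.one_apply, ite_mul, one_mul, zero_mul, Finset.sum_mul]
  rw [Finset.sum_comm (γ := b)]
  simp

/-- operator acting as `N` on `(A_k, B)` and as `M` elsewhere -/
def Emb (k : Fin K) (M : Matrix a a ℂ) (N : Matrix (a × b) (a × b) ℂ) :
    Matrix ((Fin K → a) × b) ((Fin K → a) × b) ℂ :=
  Matrix.of fun p q => (∏ l ∈ Finset.univ.erase k, M (p.1 l) (q.1 l)) *
        N (p.1 k, p.2) (q.1 k, q.2)

lemma prod_upd {α : Type*} (k : Fin K) (f : Fin K → α → ℂ) (g : α → ℂ) (r : Fin K → α) :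
    (∏ l ∈ Finset.univ.erase k, f l (r l)) * g (r k) = ∏ l, (if l = k then g (r l) else f l (r l)) := by
  rw [← Finset.prod_erase_mul _ _ (Finset.mem_univ k), if_pos rfl]
  congr 1
  apply Finset.prod_congr rfl
  intro l hl
  rw [if_neg (Finset.ne_of_mem_erase hl)]

lemma sum_prod_upd (k : Fin K) (f : Fin K → a → ℂ) (g : a → ℂ) :
    ∑ r : Fin K → a, (∏ l ∈ Finset.univ.erase k, f l (r l)) * g (r k) =
      (∏ l ∈ Finset.univ.erase k, ∑ x, f l x) * ∑ x, g x := by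
  simp only [prod_upd]
  rw [← Fintype.prod_sum (fun l x => if l = k then g x else f l x),
    ← Finset.prod_erase_mul _ _ (Finset.mem_univ k)]
  simp only [if_true]
  congr 1
  apply Finset.prod_congr rfl
  intro l hl
  simp [Finset.ne_of_mem_erase hl]

lemma emb_mul (k : Fin K) (M M' : Matrix a a ℂ) (N N' : Matrix (a × b) (a × b) ℂ) :
    Emb k M N * Emb k M' N' = Emb k (M * M') (N * N') := by
  ext p q
  simp only [Emb, Matrix.mul_apply, Matrix.of_apply, Fintype.sum_prod_type_right]
  rw [Finset.mul_sum]
  apply Finset.sum_congr rfl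
  intro c _
  rw [← sum_prod_upd k (fun l x => M (p.1 l) x * M' x (q.1 l))
    (fun x => N (p.1 k, p.2) (x, c) * N' (x, c) (q.1 k, q.2))]
  apply Finset.sum_congr rfl
  intro r _
  rw [Finset.prod_mul_distrib]
  ring

lemma emb_trace (k : Fin K) (M : Matrix a a ℂ) (N : Matrix (a × b) (a × b) ℂ) (hM : M.trace = 1) :
    (Emb k M N).trace = N.trace := by
  simp only [Emb, Matrix.trace, Matrix.diag_apply, Matrix.of_apply, Fintype.sum_prod_type_right]
  apply Finset.sum_congr rfl
  intro c _
  rw [sum_prod_upd k (fun l x => M x x) (fun x => N (x, c) (x, c))]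
  have : ∑ x, M x x = 1 := hM
  simp [this]

lemma emb_conj (k : Fin K) (M : Matrix a a ℂ) (N : Matrix (a × b) (a × b) ℂ) :
    (Emb k M N)ᴴ = Emb k Mᴴ Nᴴ := by
  ext p q
  simp [Emb, Matrix.conjTranspose_apply]

lemma emb_psd (k : Fin K) {M : Matrix a a ℂ} {N : Matrix (a × b) (a × b) ℂ}
    (hM : M.PosSemidef) (hN : N.PosSemidef) : (Emb k M N).PosSemidef := by
  have := Matrix.posSemidef_conjTranspose_mul_self (Emb k (msqrt M) (msqrt N))
  rwa [emb_conj, (msqrt_psd M).1.eq, (msqrt_psd N).1.eq, emb_mul, msqrt_mul_self hM,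
    msqrt_mul_self hN] at this

lemma emb_kron (k : Fin K) (M : Matrix a a ℂ) (B : Matrix b b ℂ) :
    Emb k M (M ⊗ₖ B) = Matrix.of fun p q => (∏ l, M (p.1 l) (q.1 l)) * B p.2 q.2 := by
  ext p q
  simp only [Emb, Matrix.of_apply, Matrix.kroneckerMap_apply]
  rw [← mul_assoc, Finset.prod_erase_mul _ (fun l => M (p.1 l) (q.1 l)) (Finset.mem_univ k)]

lemma emb_cross {k j : Fin K} (hkj : k ≠ j) (M M' : Matrix a a ℂ) (N N' : Matrix (a × b) (a × b) ℂ)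
    (hM : (M * M').trace = 1) :
    (Emb k M N * Emb j M' N').trace =
      (margB (N * (M' ⊗ₖ (1 : Matrix b b ℂ))) * margB ((M ⊗ₖ (1 : Matrix b b ℂ)) * N')).trace := by
  have hM' : ∑ x, ∑ y, M x y * M' y x = 1 := by
    simpa [Matrix.trace, Matrix.mul_apply] using hM
  simp only [Matrix.trace, Matrix.diag_apply, Matrix.mul_apply (M := Emb k M N),
    Matrix.mul_apply (M := margB _), margB_mul_kron, margB_kron_mul, Fintype.sum_prod_type_right]
  apply Finset.sum_congr rfl
  intro c _
  rw [Finset.sum_comm]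
  apply Finset.sum_congr rfl
  intro d _
  have key : ∀ p q : Fin K → a, Emb k M N (p, c) (q, d) * Emb j M' N' (q, d) (p, c) =
      ∏ l, ((if l = k then N (p l, c) (q l, d) else M (p l) (q l)) *
        (if l = j then N' (q l, d) (p l, c) else M' (q l) (p l))) := by
    intro p q
    rw [Finset.prod_mul_distrib]
    have h1 := prod_upd k (fun l (z : a × a) => M z.1 z.2) (fun z => N (z.1, c) (z.2, d))
      (fun l => (p l, q l))
    have h2 := prod_upd j (fun l (z : a × a) => M' z.1 z.2) (fun z => N' (z.1, d) (z.2, c))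
      (fun l => (q l, p l))
    simp only [Emb, Matrix.of_apply]
    exact congrArg₂ (· * ·) h1 h2
  simp only [key]
  have e2 : ∀ g : Fin K → a → a → ℂ, ∑ p : Fin K → a, ∑ q : Fin K → a, ∏ l, g l (p l) (q l)
      = ∏ l, ∑ x, ∑ y, g l x y := by
    intro g
    rw [Fintype.prod_sum (fun l x => ∑ y, g l x y)]
    apply Finset.sum_congr rfl
    intro p _
    rw [Fintype.prod_sum (fun l y => g l (p l) y)]
  rw [e2 (fun l x y => ((if l = k then N (x, c) (y, d) else M x y) *
        (if l = j then N' (y, d) (x, c) else M' y x)))]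
  rw [Finset.prod_eq_mul k j hkj]
  · simp [hkj, hkj.symm]
  · intro l _ hl
    simp [hl.1, hl.2, hM']
  · simp
  · simp

end emb

end CS

/-- Convex-split lemma (fidelity/relative-entropy form). -/
theorem convex_split_fidelity_bound {a b : Type*} [Fintype a] [DecidableEq a]
    [Fintype b] [DecidableEq b] {K : ℕ} (hK : 1 ≤ K)
    (ρAB : Matrix (a × b) (a × b) ℂ) (hρAB : IsDensity ρAB)
    (ρt : Matrix (a × b) (a × b) ℂ) (hρt : IsDensity ρt)
    (lam : ℝ)
    (h : ((2 : ℝ) ^ lam • (margA ρAB ⊗ₖ margB ρt) - ρt).PosSemidef)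
    (τt : Matrix ((Fin K → a) × b) ((Fin K → a) × b) ℂ)
    (hτt : τt = Matrix.of fun p q => (K : ℂ)⁻¹ *
      ∑ k : Fin K, (∏ l ∈ Finset.univ.erase k, margA ρAB (p.1 l) (q.1 l)) *
        ρt (p.1 k, p.2) (q.1 k, q.2))
    (target : Matrix ((Fin K → a) × b) ((Fin K → a) × b) ℂ)
    (htarget : target = Matrix.of fun p q =>
      (∏ l, margA ρAB (p.1 l) (q.1 l)) * margB ρt p.2 q.2) :
    fid τt target ≥ 1 - (2 : ℝ) ^ lam / K := by
  set A := margA ρAB with hAdef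
  set B := margB ρt with hBdef
  have hApsd : A.PosSemidef := CS.margA_psd hρAB.1
  have hBpsd : B.PosSemidef := CS.margB_psd hρt.1
  have hAtr : A.trace = 1 := (CS.trace_margA ρAB).trans hρAB.2
  have hBtr : B.trace = 1 := (CS.trace_margB ρt).trans hρt.2
  obtain ⟨rA, PA, hrA, hPA, a1, a2, a3, a4, a5, a6, a7, a8, a9⟩ := CS.exists_pinv hApsd
  obtain ⟨rB, PB, hrB, hPB, b1, b2, b3, b4, b5, b6, b7, b8, b9⟩ := CS.exists_pinv hBpsd
  have hP : (PA ⊗ₖ PB).PosSemidef := hPA.kronecker hPB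
  obtain ⟨hρP, hPρ⟩ := CS.supp_le (A := A ⊗ₖ B) (P := PA ⊗ₖ PB) hρt.1 hP
    (by rw [← Matrix.mul_kronecker_mul, a5, b5]) h
  have hPA1 : (PA ⊗ₖ (1 : Matrix b b ℂ)) * ρt = ρt := by
    rw [← hPρ, ← mul_assoc, ← Matrix.mul_kronecker_mul, a6, one_mul]
  let k0 : Fin K := ⟨0, hK⟩
  have hKpos : (0 : ℝ) < K := by exact_mod_cast hK
  have hKC : (K : ℂ) ≠ 0 := by exact_mod_cast hKpos.ne'
  -- the states
  have hτ : τt = (K : ℂ)⁻¹ • ∑ k : Fin K, CS.Emb k A ρt := by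
    rw [hτt]
    ext p q
    simp [CS.Emb, Matrix.sum_apply]
  have hembk : ∀ (M : Matrix a a ℂ) (N : Matrix b b ℂ) (k : Fin K),
      CS.Emb k0 M (M ⊗ₖ N) = CS.Emb k M (M ⊗ₖ N) := fun M N k => by
    rw [CS.emb_kron, CS.emb_kron]
  have htar : target = CS.Emb k0 A (A ⊗ₖ B) := by rw [htarget, CS.emb_kron]
  have hτpsd : τt.PosSemidef := by
    rw [hτ]
    refine Matrix.PosSemidef.smul (Matrix.posSemidef_sum _ fun k _ => CS.emb_psd k hApsd hρt.1) ?_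
    simp
  have hτtr : τt.trace = 1 := by
    rw [hτ, Matrix.trace_smul, Matrix.trace_sum]
    simp [CS.emb_trace _ _ _ hAtr, hρt.2, hKC]
  -- square root of the target and its pseudo-inverse
  have hs : msqrt target = CS.Emb k0 (msqrt A) (msqrt A ⊗ₖ msqrt B) := by
    apply CS.msqrt_unique (CS.emb_psd _ (CS.msqrt_psd A) ((CS.msqrt_psd A).kronecker (CS.msqrt_psd B)))
    rw [CS.emb_mul, ← Matrix.mul_kronecker_mul, CS.msqrt_mul_self hApsd, CS.msqrt_mul_self hBpsd, htar]
  set R := CS.Emb k0 rA (rA ⊗ₖ rB) with hRdef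
  have hRpsd : R.PosSemidef := CS.emb_psd _ hrA (hrA.kronecker hrB)
  have hsR : msqrt target * R = CS.Emb k0 PA (PA ⊗ₖ PB) := by
    rw [hs, hRdef, CS.emb_mul, ← Matrix.mul_kronecker_mul, a1, b1]
  have hsRs : msqrt target * R * msqrt target = msqrt target := by
    rw [hsR, hs, CS.emb_mul, ← Matrix.mul_kronecker_mul, a3, b3]
  have hsRt : msqrt target * R * msqrt τt = msqrt τt := by
    rw [hsR]
    apply CS.sqrt_supp hτpsd
    rw [hτ, mul_smul_comm, Finset.mul_sum]
    congr 1
    apply Finset.sum_congr rfl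
    intro k _
    rw [hembk PA PB k, CS.emb_mul, a5, hPρ]
  have hcore := CS.core (CS.msqrt_psd target) (CS.msqrt_psd τt) hRpsd hsRs hsRt
    (by rw [CS.msqrt_mul_self hτpsd, hτtr])
  rw [CS.msqrt_mul_self hτpsd] at hcore
  -- the collision term
  set ρ' := (rA ⊗ₖ rB) * ρt * (rA ⊗ₖ rB) with hρ'
  have hRk : ∀ k : Fin K, R * CS.Emb k A ρt * R = CS.Emb k PA ρ' := fun k => by
    rw [hRdef, hembk rA rB k, CS.emb_mul, CS.emb_mul, a4]
  have hPAtr : (PA * A).trace = 1 := by rw [a5, hAtr]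
  have hdiag : ∀ k : Fin K, ((R * CS.Emb k A ρt * R) * CS.Emb k A ρt).trace.re ≤ (2 : ℝ) ^ lam := by
    intro k
    rw [hRk, CS.emb_mul, CS.emb_trace _ _ _ hPAtr]
    have h1 := h.mul_mul_conjTranspose_same (rA ⊗ₖ rB)
    rw [(hrA.kronecker hrB).1.eq] at h1
    have h2 := CS.trace_mul_nonneg h1 hρt.1
    have e1 : (rA ⊗ₖ rB) * ((2 : ℝ) ^ lam • (A ⊗ₖ B) - ρt) * (rA ⊗ₖ rB)
        = (2 : ℝ) ^ lam • (PA ⊗ₖ PB) - ρ' := by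
      rw [mul_sub, sub_mul, mul_smul_comm, smul_mul_assoc, ← Matrix.mul_kronecker_mul,
        ← Matrix.mul_kronecker_mul, a4, b4]
    rw [e1, sub_mul, smul_mul_assoc, hPρ, Matrix.trace_sub, Matrix.trace_smul, hρt.2] at h2
    simpa using h2
  have hcross : ∀ k j : Fin K, k ≠ j → ((R * CS.Emb k A ρt * R) * CS.Emb j A ρt).trace = 1 := by
    intro k j hkj
    rw [hRk, CS.emb_cross hkj _ _ _ _ hPAtr, hPA1]
    have e1 : ρ' * (A ⊗ₖ (1 : Matrix b b ℂ)) = ((1 : Matrix a a ℂ) ⊗ₖ rB) *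
        ((rA ⊗ₖ (1 : Matrix b b ℂ)) * (ρt * (msqrt A ⊗ₖ (1 : Matrix b b ℂ)))) *
          ((1 : Matrix a a ℂ) ⊗ₖ rB) := by
      have f1 : rA ⊗ₖ rB = ((1 : Matrix a a ℂ) ⊗ₖ rB) * (rA ⊗ₖ (1 : Matrix b b ℂ)) := by
        rw [← Matrix.mul_kronecker_mul, one_mul, mul_one]
      have f2 : (rA ⊗ₖ rB) * (A ⊗ₖ (1 : Matrix b b ℂ)) =
          (msqrt A ⊗ₖ (1 : Matrix b b ℂ)) * ((1 : Matrix a a ℂ) ⊗ₖ rB) := by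
        rw [← Matrix.mul_kronecker_mul, ← Matrix.mul_kronecker_mul, a9]; simp
      rw [hρ', mul_assoc _ (rA ⊗ₖ rB) (A ⊗ₖ _), f2, f1]
      simp only [mul_assoc]
    rw [e1, CS.margB_right, CS.margB_left, CS.margB_comm, mul_assoc ρt, ← Matrix.mul_kronecker_mul, a1,
      mul_one, ← CS.margB_comm, hPA1, ← hBdef, b4, b5, hBtr]
  have hQ : (R * τt * R * τt).trace.re ≤ 1 + (2 : ℝ) ^ lam / K := by
    have e1 : R * τt * R * τt = ((K : ℝ)⁻¹ * (K : ℝ)⁻¹) •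
        ∑ k : Fin K, ∑ j : Fin K, (R * CS.Emb k A ρt * R) * CS.Emb j A ρt := by
      have e0 : τt = (K : ℝ)⁻¹ • ∑ k : Fin K, CS.Emb k A ρt := by
        rw [hτ]; ext p q; simp
      rw [e0]
      simp only [mul_smul_comm, smul_mul_assoc, smul_smul]
      rw [Finset.mul_sum _ _ R, Finset.sum_mul _ _ R, Finset.sum_mul_sum]
    rw [e1, Matrix.trace_smul, Matrix.trace_sum, Complex.smul_re, Complex.re_sum]
    have e2 : ∀ k : Fin K, (∑ j : Fin K, (R * CS.Emb k A ρt * R) * CS.Emb j A ρt).trace.re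
        ≤ (2 : ℝ) ^ lam + K := by
      intro k
      rw [Matrix.trace_sum, Complex.re_sum, ← Finset.add_sum_erase _ _ (Finset.mem_univ k)]
      apply add_le_add (hdiag k)
      rw [Finset.sum_congr rfl (g := fun _ => (1 : ℝ))]
      · simp
      · intro j hj
        rw [hcross k j (Finset.ne_of_mem_erase hj).symm, Complex.one_re]
    have e3 := Finset.sum_le_sum (s := Finset.univ) fun k _ => e2 k
    rw [Finset.sum_const, Finset.card_univ, Fintype.card_fin, nsmul_eq_mul] at e3
    calc _ ≤ ((K : ℝ)⁻¹ * (K : ℝ)⁻¹) • ((K : ℝ) * ((2 : ℝ) ^ lam + K)) := by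
          rw [smul_eq_mul, smul_eq_mul]
          exact mul_le_mul_of_nonneg_left e3 (by positivity)
      _ = _ := by
          rw [smul_eq_mul]
          field_simp
          ring
  have hf := CS.re_trace_le_traceNorm (msqrt τt * msqrt target)
  have hx : 0 ≤ (2 : ℝ) ^ lam / K := by positivity
  have hfid : 1 - (2 : ℝ) ^ lam / K / 2 ≤ sqrtFid τt target := by
    unfold sqrtFid
    linarith
  unfold fid
  by_cases hc : (2 : ℝ) ^ lam / K ≤ 1
  · nlinarith
  · nlinarith [sq_nonneg (sqrtFid τt target)]
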